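/- Proposition (optimality under a uniform prior): let 0 < δ < 1, let p be drawn uniformly at random from Δ_k (according to normalized (k−1)-dimensional Lebesgue surface measure), and let p̂ be the empirical distribution of n i.i.d. draws from p. Let C* be a minimal-volume confidence region and C any confidence region at level 1−δ, with all sets C*(p̂) and C(p̂) μ-measurable. Then E[μ(C*(p̂))] ≤ E[μ(C(p̂))], where the expectation is over the random p and p̂. -/

import Mathlib

open MeasureTheory Finset
open scoped ENNReal Classical

noncomputable section

/-- The discrete simplex of empirical count vectors from `n` samples over `k` categories. -/
def discSimplex (k n : ℕ) : Finset (Fin k → ℕ) :=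
  (Fintype.piFinset fun _ : Fin k => Finset.range (n + 1)).filter fun c => ∑ i, c i = n

/-- The probability simplex `Δ_k ⊆ ℝ^k`. -/
def probSimplex (k : ℕ) : Set (EuclideanSpace ℝ (Fin k)) :=
  {p | (∀ i, 0 ≤ p i) ∧ ∑ i, p i = 1}

/-- Multinomial probability of observing the empirical count vector `c` under parameter `p`. -/
def multProb (k : ℕ) (p : EuclideanSpace ℝ (Fin k)) (c : Fin k → ℕ) : ℝ :=
  (Nat.multinomial Finset.univ c : ℝ) * ∏ i, p i ^ c i

/-- Probability of a set of empirical count vectors under parameter `p`. -/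
def Pmass (k : ℕ) (p : EuclideanSpace ℝ (Fin k)) (S : Finset (Fin k → ℕ)) : ℝ :=
  ∑ c ∈ S, multProb k p c

/-- The `(k-1)`-dimensional Lebesgue (surface) measure on `Δ_k ⊆ ℝ^k`, realized as the
`(k-1)`-dimensional Hausdorff measure on Euclidean space. -/
def surfMeasure (k : ℕ) : Measure (EuclideanSpace ℝ (Fin k)) :=
  Measure.hausdorffMeasure ((k : ℝ) - 1)

/-- Expected volume of the region `C(p̂)` when the parameter `p` is drawn uniformly at random
from `Δ_k` (normalized surface measure) and `p̂` is the empirical distribution of `n` i.i.d.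
samples from `p`. -/
def expectedVolume (k n : ℕ) (C : (Fin k → ℕ) → Set (EuclideanSpace ℝ (Fin k))) : ℝ≥0∞ :=
  (∫⁻ p in probSimplex k,
      ∑ c ∈ discSimplex k n, ENNReal.ofReal (multProb k p c) * surfMeasure k (C c)
    ∂(surfMeasure k)) / surfMeasure k (probSimplex k)

/-!
Under the uniform prior the counts `n p̂` are uniformly distributed on `discSimplex k n`. Indeed, if
`x i` are independent `Gamma(c i + 1, 1)` variables, their joint density on a ray through `p ∈ Δ_k`
is a radial factor times `multProb k p c`. Integrating this density over the slices `∑ i, x i = s`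
gives `1` for every `c`, and the radial integral depends only on `∑ i, c i`, so all counts with the
same total have the same integrated likelihood. The constant relating Lebesgue measure on `ℝ^k` to
the sliced Hausdorff measures does not depend on the integrand, so it cancels and is never computed.

Hence the expected volume of a region is proportional to `∑ c, μ (C c)`, which by Tonelli is
`∫ #{c | p ∈ C c} dμ(p)`. For a confidence region, `{c | p ∈ C c}` has probability at least `1 - δ`,
so the integrand is at least `#(S* p)`, which is the integrand for `C*`.
-/

open ProbabilityTheory
open scoped NNReal

lemma sum_measure_eq_lintegral_card {α ι : Type*} [MeasurableSpace α] (μ : Measure α)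
    (s : Finset ι) {A : ι → Set α}
    (hA : ∀ i ∈ s, MeasurableSet (A i)) :
    ∑ i ∈ s, μ (A i) = ∫⁻ x, (#{i ∈ s | x ∈ A i} : ℝ≥0∞) ∂μ := by
  have hcard : ∀ x, (#{i ∈ s | x ∈ A i} : ℝ≥0∞) = ∑ i ∈ s, (A i).indicator 1 x := fun x => by
    simp [Set.indicator_apply]
  simp_rw [hcard]
  rw [lintegral_finsetSum' _ fun i hi => (measurable_one.indicator (hA i hi)).aemeasurable]
  exact sum_congr rfl fun i hi => (lintegral_indicator_one (hA i hi)).symm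

lemma lintegral_fin_nat_prod_eq_prod {n : ℕ} {E : Fin n → Type*} [∀ i, MeasurableSpace (E i)]
    (μ : ∀ i, Measure (E i)) [∀ i, SigmaFinite (μ i)] {f : ∀ i, E i → ℝ≥0∞}
    (hf : ∀ i, Measurable (f i)) :
    ∫⁻ x, ∏ i, f i (x i) ∂Measure.pi μ = ∏ i, ∫⁻ y, f i y ∂μ i := by
  induction n with
  | zero => simp
  | succ n ih =>
    have htail : Measurable fun y : ∀ i : Fin n, E i.succ => ∏ i, f i.succ (y i) :=
      Finset.measurable_prod _ fun i _ => (hf i.succ).comp (measurable_pi_apply i)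
    calc ∫⁻ x, ∏ i, f i (x i) ∂Measure.pi μ
        = ∫⁻ z : E 0 × ∀ i : Fin n, E i.succ, f 0 z.1 * ∏ i, f i.succ (z.2 i)
            ∂(μ 0).prod (Measure.pi fun i => μ i.succ) := by
          rw [(measurePreserving_piFinSuccAbove μ 0).symm.lintegral_map_equiv]
          simp only [Fin.prod_univ_succ]
          rfl
      _ = ∏ i, ∫⁻ y, f i y ∂μ i := by
          rw [lintegral_prod_mul (hf 0).aemeasurable htail.aemeasurable,
            ih _ fun i => hf i.succ, Fin.prod_univ_succ]

lemma lintegral_fintype_prod_eq_prod {ι : Type*} [Fintype ι] {E : ι → Type*}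
    [∀ i, MeasurableSpace (E i)] (μ : ∀ i, Measure (E i)) [∀ i, SigmaFinite (μ i)]
    {f : ∀ i, E i → ℝ≥0∞} (hf : ∀ i, Measurable (f i)) :
    ∫⁻ x, ∏ i, f i (x i) ∂Measure.pi μ = ∏ i, ∫⁻ y, f i y ∂μ i := by
  let e := (Fintype.equivFin ι).symm
  rw [← (measurePreserving_piCongrLeft μ e).lintegral_comp_emb
    (MeasurableEquiv.measurableEmbedding _)]
  simp_rw [← e.prod_comp, MeasurableEquiv.coe_piCongrLeft, Equiv.piCongrLeft_apply_apply]
  exact lintegral_fin_nat_prod_eq_prod _ fun i => hf (e i)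

section LevelSets

variable {E : Type*} [NormedAddCommGroup E] [NormedSpace ℝ E]

lemma range_add_coe_ker (ℓ : E →L[ℝ] ℝ) (u : E) :
    Set.range (fun v : ℓ.ker => u + v) = {x | ℓ x = ℓ u} := by
  ext x
  refine ⟨?_, fun hx => ⟨⟨x - u, ?_⟩, add_sub_cancel u x⟩⟩
  · rintro ⟨v, rfl⟩
    simp
  · simpa [sub_eq_zero] using hx

variable [MeasurableSpace E] [BorelSpace E]

lemma lintegral_ker_hausdorffMeasure (ℓ : E →L[ℝ] ℝ) (u : E) {d : ℝ} (hd : 0 ≤ d)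
    {g : E → ℝ≥0∞} (hg : Measurable g) :
    ∫⁻ v : ℓ.ker, g (u + v) ∂(Measure.hausdorffMeasure d)
      = ∫⁻ x in {x | ℓ x = ℓ u}, g x ∂(Measure.hausdorffMeasure d) := by
  have hiso : Isometry fun v : ℓ.ker => u + (v : E) :=
    (isometry_add_left u).comp isometry_subtype_coe
  rw [← range_add_coe_ker, ← hiso.map_hausdorffMeasure (.inl hd),
    lintegral_map hg hiso.continuous.measurable]

variable [FiniteDimensional ℝ E]

lemma lintegral_eq_mul_lintegral_comp_smul (μ : Measure E) [μ.IsAddHaarMeasure] {f : E → ℝ≥0∞}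
    (hf : Measurable f) {s : ℝ} (hs : s ≠ 0) :
    ∫⁻ x, f x ∂μ = ENNReal.ofReal (|s| ^ Module.finrank ℝ E) * ∫⁻ x, f (s • x) ∂μ := by
  have hpow : 0 < |s| ^ Module.finrank ℝ E := by positivity
  rw [← lintegral_map hf (measurable_const_smul s), Measure.map_addHaar_smul μ hs,
    lintegral_smul_measure, smul_eq_mul, ← mul_assoc, ← ENNReal.ofReal_mul hpow.le, abs_inv,
    abs_pow, mul_inv_cancel₀ hpow.ne', ENNReal.ofReal_one, one_mul]

lemma exists_mul_lintegral_eq_lintegral_lintegral_ker (ℓ : E →L[ℝ] ℝ) {u : E} (hu : ℓ u = 1)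
    (μ : Measure E) [μ.IsAddHaarMeasure] (ν : Measure ℓ.ker) [ν.IsAddHaarMeasure] :
    ∃ κ : ℝ≥0, κ ≠ 0 ∧ ∀ f : E → ℝ≥0∞, Measurable f →
      κ * ∫⁻ x, f x ∂μ = ∫⁻ s : ℝ, ∫⁻ v : ℓ.ker, f (s • u + v) ∂ν := by
  let e : E ≃L[ℝ] ℝ × ℓ.ker :=
    .equivOfRightInverse ℓ (ContinuousLinearMap.toSpanSingleton ℝ u) fun s => by simp [hu]
  have : (Measure.map e.symm (volume.prod ν)).IsAddHaarMeasure := e.symm.isAddHaarMeasure_map _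
  refine ⟨(Measure.map e.symm (volume.prod ν)).addHaarScalarFactor μ,
    (Measure.addHaarScalarFactor_pos_of_isAddHaarMeasure _ _).ne', fun f hf => ?_⟩
  have hfe : Measurable fun z => f (e.symm z) := hf.comp e.symm.continuous.measurable
  calc _ = ∫⁻ x, f x ∂Measure.map e.symm (volume.prod ν) := by
        conv_rhs => rw [Measure.isAddLeftInvariant_eq_smul (Measure.map e.symm _) μ]
        rw [lintegral_smul_measure, ENNReal.smul_def, smul_eq_mul]
    _ = ∫⁻ s : ℝ, ∫⁻ v : ℓ.ker, f (s • u + v) ∂ν := by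
        rw [lintegral_map hf e.symm.continuous.measurable, lintegral_prod _ hfe.aemeasurable]
        rfl

theorem exists_mul_lintegral_eq_lintegral_levelSet {ℓ : E →L[ℝ] ℝ} (hℓ : ℓ ≠ 0)
    (μ : Measure E) [μ.IsAddHaarMeasure] :
    ∃ κ : ℝ≥0, κ ≠ 0 ∧ ∀ f : E → ℝ≥0∞, Measurable f →
      κ * ∫⁻ x, f x ∂μ = ∫⁻ s : ℝ, ENNReal.ofReal (|s| ^ (Module.finrank ℝ E - 1)) *
        ∫⁻ p in {p | ℓ p = 1}, f (s • p)
          ∂(Measure.hausdorffMeasure ((Module.finrank ℝ E : ℝ) - 1)) := by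
  have hℓ' : (ℓ : E →ₗ[ℝ] ℝ) ≠ 0 := by simpa [← ContinuousLinearMap.toLinearMap_zero] using hℓ
  obtain ⟨u, hu⟩ : ∃ u, ℓ u = 1 :=
    LinearMap.surjective (f := (ℓ : E →ₗ[ℝ] ℝ)) hℓ' 1
  have hrank : Module.finrank ℝ ℓ.ker + 1 = Module.finrank ℝ E :=
    Module.Dual.finrank_ker_add_one_of_ne_zero (f := (ℓ : E →ₗ[ℝ] ℝ)) hℓ'
  obtain ⟨κ, hκ₀, hκ⟩ := exists_mul_lintegral_eq_lintegral_lintegral_ker ℓ hu μ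
    (Measure.hausdorffMeasure (Module.finrank ℝ ℓ.ker))
  refine ⟨κ, hκ₀, fun f hf => (hκ f hf).trans (lintegral_congr_ae ?_)⟩
  filter_upwards [Measure.ae_ne volume (0 : ℝ)] with s hs
  rw [lintegral_eq_mul_lintegral_comp_smul _ (by fun_prop) hs]
  simp_rw [Submodule.coe_smul, ← smul_add]
  rw [lintegral_ker_hausdorffMeasure ℓ u (by positivity) (g := fun p => f (s • p)) (by fun_prop),
    hu, ← hrank, Nat.add_sub_cancel, Nat.cast_add_one, add_sub_cancel_right]

end LevelSets

@[fun_prop]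
lemma measurable_gammaPDF (a r : ℝ) : Measurable (gammaPDF a r) :=
  (measurable_gammaPDFReal a r).ennreal_ofReal

lemma gammaPDF_natCast_add_one_one (n : ℕ) {x : ℝ} (hx : 0 ≤ x) :
    gammaPDF (n + 1) 1 x = ENNReal.ofReal (x ^ n * Real.exp (-x) / n.factorial) := by
  rw [gammaPDF_of_nonneg hx, Real.Gamma_nat_eq_factorial, add_sub_cancel_right, Real.one_rpow,
    Real.rpow_natCast, one_mul]
  congr 1
  ring

lemma lintegral_prod_gammaPDF {ι : Type*} [Fintype ι] {a r : ι → ℝ} (ha : ∀ i, 0 < a i)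
    (hr : ∀ i, 0 < r i) :
    ∫⁻ x : EuclideanSpace ℝ ι, ∏ i, gammaPDF (a i) (r i) (x i) = 1 := by
  rw [(PiLp.volume_preserving_ofLp ι).lintegral_comp
      (f := fun x => ∏ i, gammaPDF (a i) (r i) (x i)) (by fun_prop),
    volume_pi, lintegral_fintype_prod_eq_prod _ fun i => measurable_gammaPDF (a i) (r i)]
  exact prod_eq_one fun i _ => lintegral_gammaPDF_eq_one (ha i) (hr i)

lemma prod_gammaPDF_of_nonneg {ι : Type*} [Fintype ι] (c : ι → ℕ) {x : ι → ℝ}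
    (hx : ∀ i, 0 ≤ x i) :
    ∏ i, gammaPDF (c i + 1) 1 (x i)
      = ENNReal.ofReal ((∏ i, x i ^ c i) * Real.exp (-∑ i, x i) / ∏ i, (c i).factorial) := by
  simp_rw [gammaPDF_natCast_add_one_one _ (hx _)]
  rw [← ENNReal.ofReal_prod_of_nonneg fun i _ => by have := hx i; positivity]
  simp_rw [prod_div_distrib, prod_mul_distrib, ← Real.exp_sum, sum_neg_distrib]
  norm_cast

lemma prod_gammaPDF_of_neg {ι : Type*} [Fintype ι] (a r : ι → ℝ) {x : ι → ℝ} {i : ι}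
    (hx : x i < 0) :
    ∏ i, gammaPDF (a i) (r i) (x i) = 0 :=
  prod_eq_zero (mem_univ i) (gammaPDF_of_neg hx)

lemma factorial_mul_multichoose_mul_factorial (m n : ℕ) :
    m.factorial * (m + 1).multichoose n * n.factorial = (n + m).factorial := by
  rw [Nat.multichoose_eq, show m + 1 + n - 1 = m + n by omega, mul_right_comm, add_comm n m,
    ← Nat.add_choose_mul_factorial_mul_factorial m n]
  ring

lemma pow_mul_prod_smul_div_factorial {m : ℕ} (c : Fin (m + 1) → ℕ)
    (p : EuclideanSpace ℝ (Fin (m + 1))) (s : ℝ) :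
    s ^ m * ((∏ i, (s • p) i ^ c i) / ∏ i, (c i).factorial)
      = m.factorial * (m + 1).multichoose (∑ i, c i)
        * (s ^ (∑ i, c i + m) / (∑ i, c i + m).factorial) * multProb (m + 1) p c := by
  have hspec : (∏ i, ((c i).factorial : ℝ)) * Nat.multinomial univ c = (∑ i, c i).factorial :=
    mod_cast Nat.multinomial_spec univ c
  have hfac : (m.factorial * (m + 1).multichoose (∑ i, c i)
      * ((∏ i, ((c i).factorial : ℝ)) * Nat.multinomial univ c) : ℝ)
      = (∑ i, c i + m).factorial := by
    rw [hspec]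
    exact_mod_cast factorial_mul_multichoose_mul_factorial m (∑ i, c i)
  simp only [multProb, PiLp.smul_apply, smul_eq_mul, mul_pow, prod_mul_distrib,
    prod_pow_eq_pow_sum, Nat.cast_prod]
  have hne : ∏ i, ((c i).factorial : ℝ) ≠ 0 := prod_ne_zero_iff.2 fun i _ => by positivity
  field_simp
  linear_combination (-s ^ (∑ i, c i + m) * ∏ i, p i ^ c i) * hfac

lemma ofReal_mul_prod_gammaPDF_smul {m : ℕ} (c : Fin (m + 1) → ℕ)
    {p : EuclideanSpace ℝ (Fin (m + 1))} (hp : ∑ i, p i = 1) {s : ℝ} (hs : s ≠ 0) :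
    ENNReal.ofReal (|s| ^ m) * ∏ i, gammaPDF (c i + 1) 1 ((s • p) i)
      = m.factorial * (m + 1).multichoose (∑ i, c i)
        * gammaPDF ((∑ i, c i + m : ℕ) + 1) 1 s
        * (probSimplex (m + 1)).indicator (fun p => ENNReal.ofReal (multProb (m + 1) p c)) p := by
  rcases hs.lt_or_gt with hs | hs
  · obtain ⟨i, -, hi⟩ : ∃ i ∈ univ, 0 < p i := exists_lt_of_sum_lt (by simp [hp])
    rw [prod_gammaPDF_of_neg _ _ (x := (s • p).ofLp) (mul_neg_of_neg_of_pos hs hi),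
      gammaPDF_of_neg hs, mul_zero, mul_zero, zero_mul]
  by_cases hmem : p ∈ probSimplex (m + 1)
  · have hsp : ∀ i, 0 ≤ (s • p) i := fun i => mul_nonneg hs.le (hmem.1 i)
    have hsum : ∑ i, (s • p) i = s := by simp [← mul_sum, hp]
    rw [Set.indicator_of_mem hmem, gammaPDF_natCast_add_one_one _ hs.le,
      prod_gammaPDF_of_nonneg c hsp, hsum, abs_of_pos hs, ← ENNReal.ofReal_mul (by positivity),
      ← ENNReal.ofReal_natCast, ← ENNReal.ofReal_natCast ((m + 1).multichoose _),
      ← ENNReal.ofReal_mul (by positivity), ← ENNReal.ofReal_mul (by positivity),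
      ← ENNReal.ofReal_mul (by positivity)]
    congr 1
    linear_combination Real.exp (-s) * pow_mul_prod_smul_div_factorial c p s
  · obtain ⟨i, hi⟩ : ∃ i, p i < 0 := by
      simpa [probSimplex, hp] using hmem
    rw [prod_gammaPDF_of_neg _ _ (x := (s • p).ofLp) (mul_neg_of_pos_of_neg hs hi),
      Set.indicator_of_notMem hmem, mul_zero, mul_zero]

/-- The linear functional `x ↦ ∑ i, x i`, whose level set at `1` is the affine hull of `Δ_k`. -/
def coordSum (k : ℕ) : EuclideanSpace ℝ (Fin k) →L[ℝ] ℝ := ∑ i, EuclideanSpace.proj i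

lemma coordSum_apply {k : ℕ} (p : EuclideanSpace ℝ (Fin k)) : coordSum k p = ∑ i, p i := by
  simp [coordSum]

lemma coordSum_ne_zero (m : ℕ) : coordSum (m + 1) ≠ 0 := by
  intro h
  simpa [coordSum_apply] using DFunLike.congr_fun h (EuclideanSpace.single 0 1)

lemma probSimplex_eq_inter (k : ℕ) :
    probSimplex k = {p | ∀ i, 0 ≤ p i} ∩ {p | coordSum k p = 1} := by
  simp only [probSimplex, coordSum_apply, Set.ofPred_and]

lemma measurableSet_probSimplex (k : ℕ) : MeasurableSet (probSimplex k) := by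
  have : IsClosed (probSimplex k) := by
    rw [probSimplex_eq_inter, Set.ofPred_forall]
    exact (isClosed_iInter fun i => isClosed_le (by fun_prop) (by fun_prop)).inter
      (isClosed_eq (by fun_prop) (by fun_prop))
  exact this.measurableSet

@[fun_prop]
lemma measurable_multProb {k : ℕ} (c : Fin k → ℕ) : Measurable fun p => multProb k p c := by
  unfold multProb
  fun_prop

lemma mul_setLIntegral_prod_gammaPDF_smul {m : ℕ} (ν : Measure (EuclideanSpace ℝ (Fin (m + 1))))
    (c : Fin (m + 1) → ℕ) {s : ℝ} (hs : s ≠ 0) :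
    ENNReal.ofReal (|s| ^ m) * ∫⁻ p in {p | coordSum (m + 1) p = 1},
        ∏ i, gammaPDF (c i + 1) 1 ((s • p) i) ∂ν
      = m.factorial * (m + 1).multichoose (∑ i, c i) * gammaPDF ((∑ i, c i + m : ℕ) + 1) 1 s
        * ∫⁻ p in probSimplex (m + 1), ENNReal.ofReal (multProb (m + 1) p c) ∂ν := by
  have hmeas : MeasurableSet {p | coordSum (m + 1) p = 1} :=
    (isClosed_eq (by fun_prop) (by fun_prop)).measurableSet
  have hsub : probSimplex (m + 1) ∩ {p | coordSum (m + 1) p = 1} = probSimplex (m + 1) := by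
    rw [probSimplex_eq_inter, Set.inter_assoc, Set.inter_self]
  have htop : gammaPDF ((∑ i, c i + m : ℕ) + 1) 1 s ≠ ∞ := ENNReal.ofReal_ne_top
  rw [← lintegral_const_mul _ (by fun_prop), setLIntegral_congr_fun hmeas fun p hp =>
      ofReal_mul_prod_gammaPDF_smul c ((coordSum_apply p).symm.trans hp) hs,
    lintegral_const_mul' _ _ (by finiteness), setLIntegral_indicator (measurableSet_probSimplex _),
    hsub]

lemma exists_mul_lintegral_multProb_eq (m : ℕ) : ∃ κ : ℝ≥0, κ ≠ 0 ∧ ∀ c : Fin (m + 1) → ℕ,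
    m.factorial * (m + 1).multichoose (∑ i, c i) * ∫⁻ p in probSimplex (m + 1),
      ENNReal.ofReal (multProb (m + 1) p c) ∂surfMeasure (m + 1) = κ := by
  obtain ⟨κ, hκ₀, hκ⟩ := exists_mul_lintegral_eq_lintegral_levelSet (coordSum_ne_zero m) volume
  rw [finrank_euclideanSpace_fin, Nat.add_sub_cancel] at hκ
  refine ⟨κ, hκ₀, fun c => Eq.symm ?_⟩
  calc (κ : ℝ≥0∞)
      = κ * ∫⁻ x : EuclideanSpace ℝ (Fin (m + 1)), ∏ i, gammaPDF (c i + 1) 1 (x i) := by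
        rw [lintegral_prod_gammaPDF (fun _ => by positivity) fun _ => one_pos, mul_one]
    _ = ∫⁻ s, ENNReal.ofReal (|s| ^ m) * ∫⁻ p in {p | coordSum (m + 1) p = 1},
          ∏ i, gammaPDF (c i + 1) 1 ((s • p) i) ∂surfMeasure (m + 1) :=
        hκ _ (by fun_prop)
    _ = ∫⁻ s, m.factorial * (m + 1).multichoose (∑ i, c i)
          * gammaPDF ((∑ i, c i + m : ℕ) + 1) 1 s
          * ∫⁻ p in probSimplex (m + 1),
              ENNReal.ofReal (multProb (m + 1) p c) ∂surfMeasure (m + 1) :=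
        lintegral_congr_ae <| (Measure.ae_ne volume (0 : ℝ)).mono fun s hs =>
          mul_setLIntegral_prod_gammaPDF_smul _ c hs
    _ = m.factorial * (m + 1).multichoose (∑ i, c i) * ∫⁻ p in probSimplex (m + 1),
          ENNReal.ofReal (multProb (m + 1) p c) ∂surfMeasure (m + 1) := by
        rw [lintegral_mul_const _ (by fun_prop), lintegral_const_mul _ (by fun_prop),
          lintegral_gammaPDF_eq_one (by positivity) one_pos, mul_one]

lemma multProb_zero {k : ℕ} (p : EuclideanSpace ℝ (Fin k)) : multProb k p 0 = 1 := by
  simp [multProb, Nat.multinomial]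

lemma exists_factorial_mul_surfMeasure_probSimplex_eq (m : ℕ) : ∃ κ : ℝ≥0, κ ≠ 0 ∧
    m.factorial * surfMeasure (m + 1) (probSimplex (m + 1)) = κ ∧ ∀ c : Fin (m + 1) → ℕ,
    m.factorial * (m + 1).multichoose (∑ i, c i) * ∫⁻ p in probSimplex (m + 1),
      ENNReal.ofReal (multProb (m + 1) p c) ∂surfMeasure (m + 1) = κ := by
  obtain ⟨κ, hκ₀, hκ⟩ := exists_mul_lintegral_multProb_eq m
  exact ⟨κ, hκ₀, by simpa [multProb_zero] using hκ 0, hκ⟩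

lemma surfMeasure_probSimplex_ne_zero (m : ℕ) : surfMeasure (m + 1) (probSimplex (m + 1)) ≠ 0 := by
  obtain ⟨κ, hκ₀, hvol, -⟩ := exists_factorial_mul_surfMeasure_probSimplex_eq m
  exact right_ne_zero_of_mul (hvol.trans_ne (by simpa using hκ₀))

lemma surfMeasure_probSimplex_ne_top (m : ℕ) : surfMeasure (m + 1) (probSimplex (m + 1)) ≠ ∞ := by
  obtain ⟨κ, -, hvol, -⟩ := exists_factorial_mul_surfMeasure_probSimplex_eq m
  intro htop
  simp [htop, Nat.factorial_ne_zero] at hvol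

theorem lintegral_multProb {m : ℕ} (c : Fin (m + 1) → ℕ) :
    ∫⁻ p in probSimplex (m + 1), ENNReal.ofReal (multProb (m + 1) p c) ∂surfMeasure (m + 1)
      = surfMeasure (m + 1) (probSimplex (m + 1)) / (m + 1).multichoose (∑ i, c i) := by
  obtain ⟨κ, -, hvol, hκ⟩ := exists_factorial_mul_surfMeasure_probSimplex_eq m
  have hpos : (m + 1).multichoose (∑ i, c i) ≠ 0 := fun h => Nat.factorial_ne_zero _ <| by
    simpa [h] using (factorial_mul_multichoose_mul_factorial m (∑ i, c i)).symm
  rw [ENNReal.eq_div_iff (by exact_mod_cast hpos) (by finiteness),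
    ← ENNReal.mul_right_inj (a := m.factorial) (by simp [Nat.factorial_ne_zero]) (by finiteness),
    hvol, ← mul_assoc, hκ]

theorem expectedVolume_eq {m : ℕ} (n : ℕ)
    (C : (Fin (m + 1) → ℕ) → Set (EuclideanSpace ℝ (Fin (m + 1)))) :
    expectedVolume (m + 1) n C
      = (∑ c ∈ discSimplex (m + 1) n, surfMeasure (m + 1) (C c)) / (m + 1).multichoose n := by
  set V := surfMeasure (m + 1) (probSimplex (m + 1)) with hV
  have hterm : ∀ c ∈ discSimplex (m + 1) n,
      ∫⁻ p in probSimplex (m + 1), ENNReal.ofReal (multProb (m + 1) p c)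
        * surfMeasure (m + 1) (C c) ∂surfMeasure (m + 1)
      = V / (m + 1).multichoose n * surfMeasure (m + 1) (C c) := fun c hc => by
    rw [lintegral_mul_const _ (by fun_prop), lintegral_multProb, (mem_filter.1 hc).2]
  rw [expectedVolume, lintegral_finsetSum _ fun c _ => by fun_prop, sum_congr rfl hterm,
    ← mul_sum, ← hV, ← ENNReal.mul_div_right_comm, ENNReal.div_right_comm,
    mul_comm V, ENNReal.mul_div_cancel_right (surfMeasure_probSimplex_ne_zero m)
      (surfMeasure_probSimplex_ne_top m)]

lemma discSimplex_eq_piAntidiag (k n : ℕ) : discSimplex k n = univ.piAntidiag n := by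
  ext c
  have hbound (hc : ∑ i, c i = n) (i : Fin k) : c i < n + 1 :=
    Nat.lt_succ_of_le (hc ▸ single_le_sum (fun _ _ => Nat.zero_le _) (mem_univ i))
  simpa [discSimplex] using hbound

lemma Pmass_discSimplex {k : ℕ} (n : ℕ) (p : EuclideanSpace ℝ (Fin k)) :
    Pmass k p (discSimplex k n) = (∑ i, p i) ^ n := by
  rw [discSimplex_eq_piAntidiag, sum_pow_eq_sum_piAntidiag]
  rfl

lemma one_sub_le_Pmass_filter_mem {k n : ℕ} {δ : ℝ} {p : EuclideanSpace ℝ (Fin k)}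
    (hp : ∑ i, p i = 1) (q : (Fin k → ℕ) → Prop)
    (h : Pmass k p {c ∈ discSimplex k n | ¬ q c} ≤ δ) :
    1 - δ ≤ Pmass k p {c ∈ discSimplex k n | q c} := by
  have hsplit : Pmass k p {c ∈ discSimplex k n | q c} + Pmass k p {c ∈ discSimplex k n | ¬ q c}
      = 1 := by
    rw [Pmass, Pmass, sum_filter_add_sum_filter_not, ← Pmass, Pmass_discSimplex, hp, one_pow]
  linarith

/-- Optimality under a uniform prior: if `p` is drawn uniformly from `Δ_k` and `p̂` is the
empirical distribution of `n` i.i.d. draws from `p`, the expected volume of the minimal-volume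
region `C*` is at most that of any confidence region `C` at level `1-δ`. -/
theorem uniform_prior_optimality (k n : ℕ) (hk : 2 ≤ k) (hn : 1 ≤ n)
    (δ : ℝ) (hδ0 : 0 < δ) (hδ1 : δ < 1)
    -- the covering collections `S*(p)` defining the minimal-volume region `C*`
    (Sstar : EuclideanSpace ℝ (Fin k) → Finset (Fin k → ℕ))
    (hSsub : ∀ p ∈ probSimplex k, Sstar p ⊆ discSimplex k n)
    (hSmass : ∀ p ∈ probSimplex k, 1 - δ ≤ Pmass k p (Sstar p))
    (hSmin : ∀ p ∈ probSimplex k, ∀ T ⊆ discSimplex k n,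
      1 - δ ≤ Pmass k p T → (Sstar p).card ≤ T.card)
    (Cstar : (Fin k → ℕ) → Set (EuclideanSpace ℝ (Fin k)))
    (hCstar : ∀ c, Cstar c = {p : EuclideanSpace ℝ (Fin k) | p ∈ probSimplex k ∧ c ∈ Sstar p})
    -- an arbitrary confidence region `C` at level `1-δ`
    (C : (Fin k → ℕ) → Set (EuclideanSpace ℝ (Fin k)))
    (hCsub : ∀ c ∈ discSimplex k n, C c ⊆ probSimplex k)
    (hCconf : ∀ p ∈ probSimplex k,
      Pmass k p ((discSimplex k n).filter fun c => p ∉ C c) ≤ δ)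
    -- measurability of all the regions involved
    (hCstarMeas : ∀ c ∈ discSimplex k n, MeasurableSet (Cstar c))
    (hCmeas : ∀ c ∈ discSimplex k n, MeasurableSet (C c)) :
    expectedVolume k n Cstar ≤ expectedVolume k n C := by
  obtain ⟨m, rfl⟩ : ∃ m, k = m + 1 := ⟨k - 1, by omega⟩
  rw [expectedVolume_eq, expectedVolume_eq, sum_measure_eq_lintegral_card _ _ hCstarMeas,
    sum_measure_eq_lintegral_card _ _ hCmeas]
  refine ENNReal.div_le_div_right (lintegral_mono fun p => Nat.cast_le.2 ?_) _
  by_cases hp : p ∈ probSimplex (m + 1)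
  · calc #{c ∈ discSimplex (m + 1) n | p ∈ Cstar c}
        ≤ #(Sstar p) := card_le_card fun c hc => by simpa [hCstar, hp] using (mem_filter.1 hc).2
      _ ≤ #{c ∈ discSimplex (m + 1) n | p ∈ C c} :=
        hSmin p hp _ (filter_subset _ _) (one_sub_le_Pmass_filter_mem hp.2 _ (hCconf p hp))
  · simp [hCstar, hp]
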